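/- Let p be a prime and let g : ℚ_p → ℚ_p be a function satisfying: (1) for every natural number n ≥ 1 and every x ∈ ℚ_p with ‖x‖ = (p : ℝ)^(−n²), one has g x = (p : ℚ_p)^n; and (2) g x = 0 for every x whose norm is not of the form (p : ℝ)^(−n²) with n ≥ 1. (The spheres {x : ‖x‖ = p^{−n²}} are pairwise disjoint, so such g exists.) Then: (a) g is continuous on ℚ_p; (b) g is differentiable at every x ≠ 0 with deriv g x = 0; (c) g is not differentiable at 0; and (d) for every real α > 0 there is no M > 0 with ‖g x - g y‖ ≤ M·‖x - y‖^α for all x, y ∈ ℚ_p. -/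

import Mathlib

/-!
The argument works in any ultrametric field, with a nonzero `ϖ` of norm less than `1` in place of
`p`. A function of the norm alone is locally constant away from `0`, so only the behaviour at `0` is
in question. There `‖g x‖ ≤ ‖ϖ‖ ^ n` as soon as `‖x‖ ≤ ‖ϖ‖ ^ (n ^ 2)`, which gives continuity. Along
`x = ϖ ^ (n ^ 2)` this bound is attained, while `‖x‖ ^ α = (‖ϖ‖ ^ α) ^ (n ^ 2)` is negligible
compared to `‖ϖ‖ ^ n` for every `α > 0`. Hence `g` is not `O(‖x‖ ^ α)` at `0`, which rules out
differentiability (`α = 1`) and every Hölder condition.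
-/

open Filter Asymptotics Topology

theorem eventually_norm_eq_of_norm_ne_zero {E : Type*} [SeminormedAddGroup E] [IsUltrametricDist E]
    {x : E} (hx : ‖x‖ ≠ 0) : ∀ᶠ y in 𝓝 x, ‖y‖ = ‖x‖ := by
  have h_sphere : Metric.sphere (0 : E) ‖x‖ ∈ 𝓝 x :=
    (IsUltrametricDist.isOpen_sphere 0 hx).mem_nhds (mem_sphere_zero_iff_norm.mpr rfl)
  filter_upwards [h_sphere] with y hy using mem_sphere_zero_iff_norm.mp hy

theorem eventuallyEq_const_of_factorsThrough_norm {E β : Type*} [SeminormedAddGroup E]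
    [IsUltrametricDist E] {f : E → β} (hf : f.FactorsThrough norm) {x : E} (hx : ‖x‖ ≠ 0) :
    f =ᶠ[𝓝 x] fun _ ↦ f x :=
  (eventually_norm_eq_of_norm_ne_zero hx).mono fun _ hy ↦ hf hy

theorem isLittleO_pow_sq_pow {s r : ℝ} (hs₀ : 0 ≤ s) (hs₁ : s < 1) (hr : 0 < r) :
    (fun n : ℕ ↦ s ^ n ^ 2) =o[atTop] fun n : ℕ ↦ r ^ n := by
  have h_le : ∀ᶠ n : ℕ in atTop, s ^ n ≤ r / 2 :=
    (tendsto_pow_atTop_nhds_zero_of_lt_one hs₀ hs₁).eventually_le_const (half_pos hr)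
  have h_bigO : (fun n : ℕ ↦ s ^ n ^ 2) =O[atTop] fun n : ℕ ↦ (r / 2) ^ n := by
    refine IsBigO.of_norm_eventuallyLE ?_
    filter_upwards [h_le] with n hn
    rw [Real.norm_of_nonneg (by positivity), sq, pow_mul]
    gcongr
  exact h_bigO.trans_isLittleO (isLittleO_pow_pow_of_lt_left (half_pos hr).le (half_lt_self hr))

/-- The function `g` takes the value `ϖ ^ n` on the sphere of radius `‖ϖ‖ ^ (n ^ 2)` around `0`, for
every `n ≥ 1`, and vanishes off these spheres. The radii are written `‖ϖ ^ n ^ 2‖`; for `ϖ = p` in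
`ℚ_[p]` they are the numbers `p ^ (-n ^ 2)`. -/
structure IsPowOnSqSpheres {K : Type*} [NormedField K] (ϖ : K) (g : K → K) : Prop where
  eq_pow : ∀ n : ℕ, 1 ≤ n → ∀ x, ‖x‖ = ‖ϖ ^ n ^ 2‖ → g x = ϖ ^ n
  eq_zero : ∀ x, (∀ n : ℕ, 1 ≤ n → ‖x‖ ≠ ‖ϖ ^ n ^ 2‖) → g x = 0

namespace IsPowOnSqSpheres

section NormedField

variable {K : Type*} [NormedField K] {ϖ : K} {g : K → K}

theorem factorsThrough_norm (hg : IsPowOnSqSpheres ϖ g) : g.FactorsThrough norm := by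
  intro x y hxy
  by_cases hx : ∃ n : ℕ, 1 ≤ n ∧ ‖x‖ = ‖ϖ ^ n ^ 2‖
  · obtain ⟨n, hn, hx⟩ := hx
    rw [hg.eq_pow n hn x hx, hg.eq_pow n hn y (hxy ▸ hx)]
  · push Not at hx
    rw [hg.eq_zero x hx, hg.eq_zero y (hxy ▸ hx)]

theorem apply_zero (hg : IsPowOnSqSpheres ϖ g) (hϖ₀ : ϖ ≠ 0) : g 0 = 0 :=
  hg.eq_zero 0 fun n _ ↦ by
    rw [norm_zero]
    exact (norm_pos_iff.mpr (pow_ne_zero _ hϖ₀)).ne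

theorem norm_apply_le (hg : IsPowOnSqSpheres ϖ g) (hϖ₀ : ϖ ≠ 0) (hϖ₁ : ‖ϖ‖ < 1) {m : ℕ} {x : K}
    (hx : ‖x‖ ≤ ‖ϖ ^ m ^ 2‖) : ‖g x‖ ≤ ‖ϖ‖ ^ m := by
  by_cases h_sphere : ∃ n : ℕ, 1 ≤ n ∧ ‖x‖ = ‖ϖ ^ n ^ 2‖
  · obtain ⟨n, hn, hxn⟩ := h_sphere
    have hmn : m ≤ n := by
      rwa [hxn, norm_pow, norm_pow, pow_le_pow_iff_right_of_lt_one₀ (norm_pos_iff.mpr hϖ₀) hϖ₁,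
        Nat.pow_le_pow_iff_left two_ne_zero] at hx
    rw [hg.eq_pow n hn x hxn, norm_pow]
    exact pow_le_pow_of_le_one (norm_nonneg ϖ) hϖ₁.le hmn
  · push Not at h_sphere
    rw [hg.eq_zero x h_sphere, norm_zero]
    positivity

theorem continuousAt_zero (hg : IsPowOnSqSpheres ϖ g) (hϖ₀ : ϖ ≠ 0) (hϖ₁ : ‖ϖ‖ < 1) :
    ContinuousAt g 0 := by
  rw [ContinuousAt, hg.apply_zero hϖ₀, NormedAddGroup.tendsto_nhds_zero]
  intro ε hε
  obtain ⟨m, hm⟩ := exists_pow_lt_of_lt_one hε hϖ₁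
  have h_pos : 0 < ‖ϖ ^ m ^ 2‖ := norm_pos_iff.mpr (pow_ne_zero _ hϖ₀)
  filter_upwards [Metric.closedBall_mem_nhds 0 h_pos] with x hx
  exact (hg.norm_apply_le hϖ₀ hϖ₁ (mem_closedBall_zero_iff.mp hx)).trans_lt hm

theorem not_isBigO_rpow (hg : IsPowOnSqSpheres ϖ g) (hϖ₀ : ϖ ≠ 0) (hϖ₁ : ‖ϖ‖ < 1) {α : ℝ}
    (hα : 0 < α) : ¬ g =O[𝓝 0] fun x ↦ ‖x‖ ^ α := by
  intro h_bigO
  have h_lim : Tendsto (fun n : ℕ ↦ ϖ ^ n ^ 2) atTop (𝓝 0) :=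
    (tendsto_pow_atTop_nhds_zero_of_norm_lt_one hϖ₁).comp (tendsto_pow_atTop two_ne_zero)
  have h_values : (fun n : ℕ ↦ g (ϖ ^ n ^ 2)) =ᶠ[atTop] fun n ↦ ϖ ^ n := by
    filter_upwards [eventually_ge_atTop 1] with n hn using hg.eq_pow n hn _ rfl
  have h_radii (n : ℕ) : ‖ϖ ^ n ^ 2‖ ^ α = (‖ϖ‖ ^ α) ^ n ^ 2 := by
    rw [norm_pow, Real.rpow_pow_comm (norm_nonneg ϖ)]
  have h_small : (fun n : ℕ ↦ ‖ϖ ^ n ^ 2‖ ^ α) =o[atTop] fun n : ℕ ↦ ϖ ^ n := by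
    simp only [h_radii]
    rw [← isLittleO_norm_right]
    simp only [norm_pow]
    exact isLittleO_pow_sq_pow (by positivity) (Real.rpow_lt_one (norm_nonneg ϖ) hϖ₁ hα)
      (norm_pos_iff.mpr hϖ₀)
  have h_self : (fun n : ℕ ↦ ϖ ^ n) =o[atTop] fun n ↦ ϖ ^ n :=
    ((h_bigO.comp_tendsto h_lim).congr' h_values .rfl).trans_isLittleO h_small
  exact isLittleO_irrefl (.of_forall fun n ↦ pow_ne_zero n hϖ₀) h_self

theorem not_holder (hg : IsPowOnSqSpheres ϖ g) (hϖ₀ : ϖ ≠ 0) (hϖ₁ : ‖ϖ‖ < 1) {α : ℝ} (hα : 0 < α) :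
    ¬ ∃ M : ℝ, 0 < M ∧ ∀ x y, ‖g x - g y‖ ≤ M * ‖x - y‖ ^ α := by
  rintro ⟨M, -, hM⟩
  refine hg.not_isBigO_rpow hϖ₀ hϖ₁ hα (.of_bound M (.of_forall fun x ↦ ?_))
  have h_zero := hM x 0
  rw [hg.apply_zero hϖ₀, sub_zero, sub_zero] at h_zero
  exact h_zero.trans_eq (by rw [Real.norm_of_nonneg (by positivity)])

end NormedField

section NontriviallyNormedField

variable {K : Type*} [NontriviallyNormedField K] {ϖ : K} {g : K → K}

theorem hasDerivAt_zero_of_ne_zero [IsUltrametricDist K] (hg : IsPowOnSqSpheres ϖ g) {x : K}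
    (hx : x ≠ 0) : HasDerivAt g 0 x :=
  (hasDerivAt_const x (g x)).congr_of_eventuallyEq
    (eventuallyEq_const_of_factorsThrough_norm hg.factorsThrough_norm (norm_ne_zero_iff.mpr hx))

theorem continuous [IsUltrametricDist K] (hg : IsPowOnSqSpheres ϖ g) (hϖ₀ : ϖ ≠ 0)
    (hϖ₁ : ‖ϖ‖ < 1) : Continuous g := by
  refine continuous_iff_continuousAt.mpr fun x ↦ ?_
  rcases eq_or_ne x 0 with rfl | hx
  · exact hg.continuousAt_zero hϖ₀ hϖ₁
  · exact (hg.hasDerivAt_zero_of_ne_zero hx).continuousAt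

theorem not_differentiableAt_zero (hg : IsPowOnSqSpheres ϖ g) (hϖ₀ : ϖ ≠ 0) (hϖ₁ : ‖ϖ‖ < 1) :
    ¬ DifferentiableAt K g 0 := by
  intro h_diff
  have h_bigO : g =O[𝓝 0] fun x ↦ ‖x‖ := by
    simpa only [hg.apply_zero hϖ₀, sub_zero] using h_diff.isBigO_sub.norm_right
  exact hg.not_isBigO_rpow hϖ₀ hϖ₁ one_pos (by simpa only [Real.rpow_one] using h_bigO)

end NontriviallyNormedField

end IsPowOnSqSpheres

theorem stmt_10_general {K : Type*} [NontriviallyNormedField K] [IsUltrametricDist K] {ϖ : K}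
    (hϖ₀ : ϖ ≠ 0) (hϖ₁ : ‖ϖ‖ < 1) {g : K → K} (hg : IsPowOnSqSpheres ϖ g) :
    Continuous g ∧
    (∀ x : K, x ≠ 0 → HasDerivAt g 0 x) ∧
    ¬ DifferentiableAt K g 0 ∧
    ∀ α : ℝ, 0 < α → ¬ ∃ M : ℝ, 0 < M ∧ ∀ x y : K, ‖g x - g y‖ ≤ M * ‖x - y‖ ^ α :=
  ⟨hg.continuous hϖ₀ hϖ₁, fun _ ↦ hg.hasDerivAt_zero_of_ne_zero,
    hg.not_differentiableAt_zero hϖ₀ hϖ₁, fun _ ↦ hg.not_holder hϖ₀ hϖ₁⟩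

theorem padic_norm_p_pow_sq (p : ℕ) [Fact p.Prime] (n : ℕ) :
    ‖(p : ℚ_[p]) ^ n ^ 2‖ = (p : ℝ) ^ (-((n : ℤ) ^ 2)) := by
  rw [Padic.norm_p_pow, Nat.cast_pow]

/-- The function `g : ℚ_[p] → ℚ_[p]` equal to `p^n` on each sphere
`{x : ‖x‖ = p^{-n²}}` (`n ≥ 1`) and `0` elsewhere is continuous, differentiable with
derivative `0` at every `x ≠ 0`, not differentiable at `0`, and not Lipschitz of any
order `α > 0`. -/
theorem stmt_10 (p : ℕ) [Fact p.Prime] (g : ℚ_[p] → ℚ_[p])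
    (h1 : ∀ n : ℕ, 1 ≤ n → ∀ x : ℚ_[p],
      ‖x‖ = (p : ℝ) ^ (-((n : ℤ) ^ 2)) → g x = (p : ℚ_[p]) ^ n)
    (h2 : ∀ x : ℚ_[p],
      (∀ n : ℕ, 1 ≤ n → ‖x‖ ≠ (p : ℝ) ^ (-((n : ℤ) ^ 2))) → g x = 0) :
    Continuous g ∧
    (∀ x : ℚ_[p], x ≠ 0 → HasDerivAt g 0 x) ∧
    ¬ DifferentiableAt ℚ_[p] g 0 ∧
    ∀ α : ℝ, 0 < α →
      ¬ ∃ M : ℝ, 0 < M ∧ ∀ x y : ℚ_[p], ‖g x - g y‖ ≤ M * ‖x - y‖ ^ α :=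
  stmt_10_general (NeZero.ne (p : ℚ_[p])) Padic.norm_p_lt_one
    ⟨by simpa only [padic_norm_p_pow_sq] using h1, by simpa only [padic_norm_p_pow_sq] using h2⟩
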